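/- Let L ≥ 2, 0 ≤ N ≤ L be integers, let 0 < q < 1 and let β, b be real numbers. Consider site rates β_1 = 0, β_n = b for 2 ≤ n ≤ L−1 and β_L = β, and let P_N be the normalized closed-ASEP stationary measure on N-element subsets of {1,...,L}. Then the sector-N expectation B_N = ∑_{B} P_N(B) ∑_{n ∈ B} β_n equals ( b(N−1) + β + (b − β) q^N − b q^{L−N} + (b − bN) q^L ) / (1 − q^L). -/

import Mathlib

/-!
The total rate on an `N`-particle configuration `B` is `b N - b [1 ∈ B] + (β - b) [L ∈ B]`, so only
the occupation probabilities of the first and the last site are needed.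

Write `Z L N = ∑_{B ∈ W L N} q ^ w(B)`. Forgetting the last site, or forgetting the first one and
shifting the others down, changes `w(B)` only by an amount depending on `L`, `N` and the occupation
of the forgotten site. In the sector `(L + 1, N + 1)`, the configurations occupying the last site
therefore weigh `Z L N` in total, those occupying the first site weigh `q ^ (L - N) Z L N`, and the
two decompositions are the two `q`-Pascal rules
`Z (L+1) (N+1) = Z L N + q ^ (N+1) Z L (N+1) = q ^ (L-N) Z L N + Z L (N+1)`.
Eliminating `Z L (N+1)` yields `(1 - q ^ (N+1)) Z (L+1) (N+1) = (1 - q ^ (L+1)) Z L N`, which both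
evaluates `Z` as the `q`-binomial coefficient and gives the two occupation probabilities.
-/

open Finset

/-- The set of sites `{1, ..., L}`. -/
def sites (L : ℕ) : Finset ℕ := Finset.Icc 1 L

/-- `W L N` : the collection of `N`-element subsets of `{1, ..., L}`
(the `N`-particle sector). -/
def W (L N : ℕ) : Finset (Finset ℕ) := Finset.powersetCard N (sites L)

/-- The exponent `w(B) = ∑_{j=1}^N (L − j + 1 − n_j)` for `B = {n_1 < ... < n_N}`,
written as `∑_{n ∈ B} (L + 1 − n) − ∑_{j=1}^N j`. -/
def wgt (L : ℕ) (B : Finset ℕ) : ℤ :=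
  (∑ n ∈ B, ((L : ℤ) + 1 - (n : ℤ))) - ((B.card * (B.card + 1)) / 2 : ℕ)

section PowersetCard

variable {α M : Type*} [AddCommMonoid M]

theorem sum_powersetCard_map {β : Type*} (g : β ↪ α) (s : Finset β) (k : ℕ) (f : Finset α → M) :
    ∑ B ∈ powersetCard k (s.map g), f B = ∑ B ∈ powersetCard k s, f (B.map g) := by
  rw [powersetCard_map, sum_map]
  rfl

variable [DecidableEq α] {s : Finset α} {x : α}

theorem filter_notMem_powersetCard_insert (hx : x ∉ s) (k : ℕ) :
    {B ∈ powersetCard k (insert x s) | x ∉ B} = powersetCard k s := by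
  grind

theorem filter_mem_powersetCard_succ_insert (hx : x ∉ s) (k : ℕ) :
    {B ∈ powersetCard (k + 1) (insert x s) | x ∈ B} = (powersetCard k s).image (insert x) := by
  rw [powersetCard_succ_insert hx]
  grind

theorem sum_powersetCard_insert_notMem (hx : x ∉ s) (k : ℕ) (f : Finset α → M) :
    ∑ B ∈ powersetCard k (insert x s) with x ∉ B, f B = ∑ B ∈ powersetCard k s, f B := by
  rw [filter_notMem_powersetCard_insert hx]

theorem sum_powersetCard_succ_insert_mem (hx : x ∉ s) (k : ℕ) (f : Finset α → M) :
    ∑ B ∈ powersetCard (k + 1) (insert x s) with x ∈ B, f B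
      = ∑ B ∈ powersetCard k s, f (insert x B) := by
  rw [filter_mem_powersetCard_succ_insert hx, sum_image]
  exact insert_erase_invOn.2.injOn.mono fun B hB => notMem_mono (mem_powersetCard.1 hB).1 hx

end PowersetCard

theorem zpow_add_natCast_of_nonneg {G : Type*} [DivInvMonoid G] (a : G) {m : ℤ} (hm : 0 ≤ m)
    (n : ℕ) : a ^ (m + n) = a ^ m * a ^ n := by
  lift m to ℕ using hm
  rw [← Nat.cast_add, zpow_natCast, zpow_natCast, pow_add]

section Sites

variable {L N : ℕ} {B : Finset ℕ}

theorem sites_succ_eq_insert_last (L : ℕ) : sites (L + 1) = insert (L + 1) (sites L) :=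
  (insert_Icc_right_eq_Icc_add_one (by lia)).symm

theorem sites_succ_eq_insert_first (L : ℕ) :
    sites (L + 1) = insert 1 ((sites L).map (addRightEmbedding 1)) := by
  rw [sites, sites, map_add_right_Icc, insert_Icc_add_one_left_eq_Icc (by lia)]

theorem last_notMem_sites (L : ℕ) : L + 1 ∉ sites L := by
  simp [sites]

theorem first_notMem_map_sites (L : ℕ) : 1 ∉ (sites L).map (addRightEmbedding 1) := by
  simp [sites]

theorem wgt_succ (L : ℕ) (B : Finset ℕ) : wgt (L + 1) B = wgt L B + #B := by
  simp only [wgt, sum_sub_distrib, sum_const, nsmul_eq_mul]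
  push_cast
  ring

theorem wgt_insert {x : ℕ} (L : ℕ) (hx : x ∉ B) :
    wgt L (insert x B) = wgt L B + (L - x - #B) := by
  have triangle_succ : (#B + 1) * (#B + 1 + 1) / 2 = #B * (#B + 1) / 2 + (#B + 1) := by
    lia
  rw [wgt, wgt, sum_insert hx, card_insert_of_notMem hx, triangle_succ]
  push_cast
  ring

theorem wgt_map_add_one (L : ℕ) (B : Finset ℕ) :
    wgt (L + 1) (B.map (addRightEmbedding 1)) = wgt L B := by
  simp only [wgt, sum_map, card_map, addRightEmbedding_apply, Nat.cast_add, Nat.cast_one,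
    add_sub_add_right_eq_sub]

theorem wgt_succ_insert_last (hB : B ⊆ sites L) :
    wgt (L + 1) (insert (L + 1) B) = wgt L B := by
  rw [wgt_insert _ (notMem_mono hB (last_notMem_sites L)), wgt_succ]
  push_cast
  ring

theorem wgt_succ_insert_first (hB : B ∈ W L N) (hN : N ≤ L) :
    wgt (L + 1) (insert 1 (B.map (addRightEmbedding 1))) = wgt L B + (L - N : ℕ) := by
  obtain ⟨hsub, rfl⟩ := mem_powersetCard.1 hB
  rw [wgt_insert _ (notMem_mono (map_subset_map.2 hsub) (first_notMem_map_sites L)),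
    wgt_map_add_one, card_map]
  push_cast [hN]
  ring

theorem wgt_nonneg (hB : B ⊆ sites L) : 0 ≤ wgt L B := by
  induction L generalizing B with
  | zero => simp_all [sites, wgt]
  | succ L ih =>
    rw [sites_succ_eq_insert_last] at hB
    by_cases hlast : L + 1 ∈ B
    · have herase : B.erase (L + 1) ⊆ sites L := subset_insert_iff.1 hB
      rw [← insert_erase hlast, wgt_succ_insert_last herase]
      exact ih herase
    · have hsub : B ⊆ sites L := (subset_insert_iff_of_notMem hlast).1 hB
      rw [wgt_succ]
      exact add_nonneg (ih hsub) (Nat.cast_nonneg _)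

end Sites

theorem sum_rate_eq {M : Type*} [AddCommGroup M] {L : ℕ} (hL : L ≠ 1) (β b : M) (B : Finset ℕ) :
    (∑ n ∈ B, if n = 1 then 0 else if n = L then β else b)
      = #B • b - (if 1 ∈ B then b else 0) + (if L ∈ B then β - b else 0) := by
  have rate_eq (n : ℕ) : (if n = 1 then 0 else if n = L then β else b)
      = b - (if n = 1 then b else 0) + (if n = L then β - b else 0) := by
    split_ifs <;> first | lia | abel
  simp only [rate_eq, sum_add_distrib, sum_sub_distrib, sum_const, sum_ite_eq']

section PartitionFunction

variable {K : Type*} [Field K]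

/-- The partition function of the `N`-particle sector on `L` sites: the total weight of its
configurations, which normalizes the stationary measure. -/
def partFn (q : K) (L N : ℕ) : K :=
  ∑ B ∈ W L N, q ^ wgt L B

/-- The total weight of the configurations in the `N`-particle sector on `L` sites that occupy the
site `n`. Divided by `partFn q L N` it is the occupation probability of `n`. -/
def occWeight (q : K) (L N n : ℕ) : K :=
  ∑ B ∈ W L N with n ∈ B, q ^ wgt L B

variable (q : K) {L N : ℕ}

theorem occWeight_succ_last (L N : ℕ) :
    occWeight q (L + 1) (N + 1) (L + 1) = partFn q L N := by
  rw [occWeight, W, sites_succ_eq_insert_last,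
    sum_powersetCard_succ_insert_mem (last_notMem_sites L)]
  refine sum_congr rfl fun B hB => ?_
  rw [wgt_succ_insert_last (mem_powersetCard.1 hB).1]

theorem occWeight_succ_first (hN : N ≤ L) :
    occWeight q (L + 1) (N + 1) 1 = q ^ (L - N) * partFn q L N := by
  rw [occWeight, W, sites_succ_eq_insert_first,
    sum_powersetCard_succ_insert_mem (first_notMem_map_sites L), sum_powersetCard_map, partFn,
    mul_sum]
  refine sum_congr rfl fun B hB => ?_
  rw [wgt_succ_insert_first hB hN,
    zpow_add_natCast_of_nonneg q (wgt_nonneg (mem_powersetCard.1 hB).1), mul_comm]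

theorem partFn_succ_eq_occWeight_last_add (L N : ℕ) :
    partFn q (L + 1) N = occWeight q (L + 1) N (L + 1) + q ^ N * partFn q L N := by
  rw [partFn, ← sum_filter_add_sum_filter_not _ (L + 1 ∈ ·), occWeight]
  congr 1
  rw [W, sites_succ_eq_insert_last, sum_powersetCard_insert_notMem (last_notMem_sites L), partFn,
    mul_sum]
  refine sum_congr rfl fun B hB => ?_
  obtain ⟨hsub, rfl⟩ := mem_powersetCard.1 hB
  rw [wgt_succ, zpow_add_natCast_of_nonneg q (wgt_nonneg hsub), mul_comm]

theorem partFn_succ_eq_occWeight_first_add (L N : ℕ) :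
    partFn q (L + 1) N = occWeight q (L + 1) N 1 + partFn q L N := by
  rw [partFn, ← sum_filter_add_sum_filter_not _ (1 ∈ ·), occWeight]
  congr 1
  rw [W, sites_succ_eq_insert_first, sum_powersetCard_insert_notMem (first_notMem_map_sites L),
    sum_powersetCard_map, partFn, W]
  simp only [wgt_map_add_one]

theorem one_sub_pow_mul_partFn_succ_succ (hN : N ≤ L) :
    (1 - q ^ (N + 1)) * partFn q (L + 1) (N + 1) = (1 - q ^ (L + 1)) * partFn q L N := by
  have hlast := partFn_succ_eq_occWeight_last_add q L (N + 1)
  have hfirst := partFn_succ_eq_occWeight_first_add q L (N + 1)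
  have hpow : q ^ (N + 1) * q ^ (L - N) = q ^ (L + 1) := by
    rw [← pow_add]
    congr 1
    lia
  rw [occWeight_succ_last] at hlast
  rw [occWeight_succ_first q hN] at hfirst
  linear_combination hlast - q ^ (N + 1) * hfirst - partFn q L N * hpow

theorem one_sub_pow_mul_occWeight_last (hN : N ≤ L) :
    (1 - q ^ L) * occWeight q L N L = (1 - q ^ N) * partFn q L N := by
  obtain _ | N := N
  · simp [occWeight, W, filter_singleton]
  obtain _ | L := L
  · lia
  rw [occWeight_succ_last, one_sub_pow_mul_partFn_succ_succ q (by lia)]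

theorem one_sub_pow_mul_occWeight_first (hN : N ≤ L) :
    (1 - q ^ L) * occWeight q L N 1 = (q ^ (L - N) - q ^ L) * partFn q L N := by
  obtain _ | N := N
  · simp [occWeight, W, filter_singleton]
  obtain _ | L := L
  · lia
  have hpow : q ^ (L + 1) = q ^ (L - N) * q ^ (N + 1) := by
    rw [← pow_add]
    congr 1
    lia
  rw [occWeight_succ_first q (by lia), Nat.add_sub_add_right]
  linear_combination -q ^ (L - N) * one_sub_pow_mul_partFn_succ_succ q (L := L) (N := N) (by lia)
    + partFn q (L + 1) (N + 1) * hpow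

theorem sum_weight_mul_rate (hL : L ≠ 1) (N : ℕ) (β b : K) :
    ∑ B ∈ W L N, q ^ wgt L B * (∑ n ∈ B, if n = 1 then 0 else if n = L then β else b)
      = N * b * partFn q L N - b * occWeight q L N 1 + (β - b) * occWeight q L N L := by
  simp only [partFn, occWeight, sum_filter, mul_sum (s := W L N), ← sum_sub_distrib,
    ← sum_add_distrib]
  refine sum_congr rfl fun B hB => ?_
  rw [sum_rate_eq hL, (mem_powersetCard.1 hB).2, nsmul_eq_mul]
  split_ifs <;> ring

variable {q}

theorem partFn_eq_prod (hN : N ≤ L) (hq : ∀ i ∈ Icc 1 N, q ^ i ≠ 1) :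
    partFn q L N = ∏ i ∈ Icc 1 N, (1 - q ^ (L - N + i)) / (1 - q ^ i) := by
  induction N generalizing L with
  | zero => simp [partFn, W, wgt]
  | succ N ih =>
    obtain _ | L := L
    · lia
    have hne : 1 - q ^ (N + 1) ≠ 0 := sub_ne_zero.2 (hq _ (by simp)).symm
    have hNL : N ≤ L := by lia
    rw [prod_Icc_succ_top (by lia), Nat.add_sub_add_right,
      ← ih hNL fun i hi => hq i (Icc_subset_Icc_right (by lia) hi),
      show L - N + (N + 1) = L + 1 by lia, mul_div_assoc', eq_div_iff hne, mul_comm,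
      one_sub_pow_mul_partFn_succ_succ q hNL, mul_comm]

theorem partFn_ne_zero (hN : N ≤ L) (hq : ∀ i ∈ Icc 1 L, q ^ i ≠ 1) : partFn q L N ≠ 0 := by
  have hne {i : ℕ} (hi : i ∈ Icc 1 L) : 1 - q ^ i ≠ 0 := sub_ne_zero.2 (hq i hi).symm
  rw [partFn_eq_prod hN fun i hi => hq i (Icc_subset_Icc_right hN hi), prod_ne_zero_iff]
  intro i hi
  exact div_ne_zero (hne (by grind)) (hne (by grind))

end PartitionFunction

theorem stmt18_general {K : Type*} [Field K] {L N : ℕ} (hL : 2 ≤ L) (hN : N ≤ L) {q : K} (β b : K)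
    (hq : ∀ i ∈ Icc 1 L, q ^ i ≠ 1) :
    ∑ B ∈ W L N,
        (q ^ wgt L B / ∏ i ∈ Icc 1 N, (1 - q ^ (L - N + i)) / (1 - q ^ i)) *
          (∑ n ∈ B, if n = 1 then 0 else if n = L then β else b)
      = (b * ((N : K) - 1) + β + (b - β) * q ^ N - b * q ^ (L - N)
          + (b - b * (N : K)) * q ^ L) / (1 - q ^ L) := by
  have hZ : partFn q L N ≠ 0 := partFn_ne_zero hN hq
  have hqL : 1 - q ^ L ≠ 0 := sub_ne_zero.2 (hq L (mem_Icc.2 ⟨by lia, le_rfl⟩)).symm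
  rw [← partFn_eq_prod hN fun i hi => hq i (Icc_subset_Icc_right hN hi)]
  simp only [div_mul_eq_mul_div]
  rw [← sum_div, sum_weight_mul_rate q (by lia), div_eq_div_iff hZ hqL]
  linear_combination (β - b) * one_sub_pow_mul_occWeight_last q hN
    - b * one_sub_pow_mul_occWeight_first q hN

/-- for site rates `β_1 = 0`, `β_n = b` for `2 ≤ n ≤ L−1`, `β_L = β`, the
sector-`N` expectation of the total desorption rate under the normalized closed-ASEP
stationary measure `P_N(B) = q^{w(B)}/[L choose N]_q` is
`B_N = (b(N−1) + β + (b − β) q^N − b q^{L−N} + (b − bN) q^L)/(1 − q^L)`. -/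
theorem stmt18 (L N : ℕ) (hL : 2 ≤ L) (hN : N ≤ L) (q β b : ℝ)
    (hq0 : 0 < q) (hq1 : q < 1) :
    ∑ B ∈ W L N,
        (q ^ wgt L B / ∏ i ∈ Finset.Icc 1 N, (1 - q ^ (L - N + i)) / (1 - q ^ i)) *
          (∑ n ∈ B, if n = 1 then 0 else if n = L then β else b)
      = (b * ((N : ℝ) - 1) + β + (b - β) * q ^ N - b * q ^ (L - N)
          + (b - b * (N : ℝ)) * q ^ L) / (1 - q ^ L) := by
  refine stmt18_general hL hN β b fun i hi => (pow_lt_one₀ hq0.le hq1 ?_).ne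
  exact Nat.one_le_iff_ne_zero.1 (mem_Icc.1 hi).1
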